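/- arXiv:1903.06826 — 3 statements merged into one kernel-verified Lean document; each statement's English description precedes it below -/
import Mathlib

section
/- Let V : ℝ → ℝ be an even, locally Lebesgue-integrable function with ess inf V > −∞ and V(x) → ∞ as |x| → ∞. Let (λ_n) be a sequence of positive reals with λ_n → ∞, and let w_n : ℝ → ℝ be twice differentiable functions satisfying w_n''(x) = 4π²(V(x) − λ_n)·w_n(x) for all x ∈ ℝ. Assume: (H1) w_n is even when n is even and odd when n is odd; (H3) sgn(w_{2n}(0)) = (−1)^n and sgn(w'_{2n+1}(0)) = (−1)^n for all n. Let x, y be real numbers such that x/y is irrational, and assume that both sequences of pairs (√λ_{2n}·x, √λ_{2n}·y)_n and (√λ_{2n+1}·x, √λ_{2n+1}·y)_n are equidistributed modulo 1 in ℝ². Then (1/N) · #{0 ≤ n < N : sgn(w_n(x)) = sgn(w_n(y))} → 1/2 as N → ∞. -/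
open Filter Real MeasureTheory
open scoped Classical

noncomputable def sgn (t : ℝ) : ℝ := if 0 < t then 1 else if t < 0 then -1 else 0

def EquidistributedMod1Pair (a b : ℕ → ℝ) : Prop :=
  ∀ c₁ d₁ c₂ d₂ : ℝ, 0 ≤ c₁ → c₁ ≤ d₁ → d₁ ≤ 1 → 0 ≤ c₂ → c₂ ≤ d₂ → d₂ ≤ 1 →
    Tendsto (fun N : ℕ =>
      (((Finset.range N).filter (fun n =>
        Int.fract (a n) ∈ Set.Icc c₁ d₁ ∧ Int.fract (b n) ∈ Set.Icc c₂ d₂)).card : ℝ) / N)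
      atTop (nhds ((d₁ - c₁) * (d₂ - c₂)))

/-!
Compare `w_n` on the segment from `0` to `x` with the solution of `g'' = -(2π√λ_n)² g` having the
same initial values at `0`. By Duhamel's formula their difference is `O(λ_n ^ (-1/2))` relative to
the amplitude of `g`. Parity leaves only the cosine part of `g` for even `n` and only the sine part
for odd `n`, so away from the zeros of the cosine (sine) the sign of `w_n x` is, up to a factor
independent of `x`, determined by the quarter (half) of the unit interval containing the fractional
part of `√λ_n x`. Hence whether the signs at `x` and `y` agree is decided by the cell of a `4 × 4`
(`2 × 2`) grid on the torus containing the pair of fractional parts. Agreement occurs on exactly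
half of the cells, and by equidistribution every cell is visited with frequency equal to its area.
-/

open Asymptotics Topology

section Density

variable {P Q : ℕ → Prop} {d : ℝ}

/-- The relative frequency of `P` among the natural numbers below `N`; it is `0` for `N = 0`. -/
noncomputable def relFreq (P : ℕ → Prop) (N : ℕ) : ℝ :=
  (((Finset.range N).filter P).card : ℝ) / N

/-- The natural density of the set of natural numbers satisfying `P` exists and equals `d`. -/
def HasDensity (P : ℕ → Prop) (d : ℝ) : Prop :=
  Tendsto (relFreq P) atTop (𝓝 d)

/-- The lower natural density of the set of natural numbers satisfying `P`. -/
noncomputable def lowerDensity (P : ℕ → Prop) : ℝ :=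
  liminf (relFreq P) atTop

theorem relFreq_eq_card_div (P : ℕ → Prop) [DecidablePred P] (N : ℕ) :
    relFreq P N = (((Finset.range N).filter P).card : ℝ) / N := by
  unfold relFreq
  congr

theorem relFreq_nonneg (P : ℕ → Prop) (N : ℕ) : 0 ≤ relFreq P N := by
  unfold relFreq
  positivity

theorem relFreq_le_one (P : ℕ → Prop) (N : ℕ) : relFreq P N ≤ 1 := by
  refine div_le_one_of_le₀ ?_ N.cast_nonneg
  exact_mod_cast (Finset.card_filter_le _ _).trans (Finset.card_range N).le

theorem relFreq_add_relFreq_not (P : ℕ → Prop) {N : ℕ} (hN : N ≠ 0) :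
    relFreq P N + relFreq (fun n => ¬ P n) N = 1 := by
  rw [relFreq_eq_card_div, relFreq_eq_card_div, ← add_div,
    div_eq_one_iff_eq (Nat.cast_ne_zero.2 hN)]
  exact_mod_cast (Finset.card_filter_add_card_filter_not P).trans (Finset.card_range N)

theorem le_lowerDensity_iff :
    d ≤ lowerDensity P ↔ ∀ c < d, ∀ᶠ N in atTop, c < relFreq P N :=
  le_liminf_iff (isBoundedUnder_of ⟨1, relFreq_le_one P⟩).isCoboundedUnder_ge
    (isBoundedUnder_of ⟨0, relFreq_nonneg P⟩)

theorem HasDensity.le_lowerDensity (hP : HasDensity P d) (hPQ : ∀ᶠ n in atTop, P n → Q n) :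
    d ≤ lowerDensity Q := by
  obtain ⟨n₀, hn₀⟩ := eventually_atTop.1 hPQ
  have hlim : Tendsto (fun N : ℕ => relFreq P N - (n₀ : ℝ) / N) atTop (𝓝 d) := by
    simpa only [sub_zero] using hP.sub (tendsto_const_div_atTop_nhds_zero_nat (n₀ : ℝ))
  refine le_lowerDensity_iff.2 fun c hc => ?_
  filter_upwards [hlim.eventually_const_lt hc] with N hN
  refine hN.trans_le ?_
  have hsub : (Finset.range N).filter P ⊆ (Finset.range N).filter Q ∪ Finset.range n₀ := by
    intro n
    have := hn₀ n
    grind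
  have hcard := (Finset.card_le_card hsub).trans (Finset.card_union_le _ _)
  rw [Finset.card_range] at hcard
  rw [relFreq, relFreq, ← sub_div]
  gcongr
  rw [sub_le_iff_le_add]
  exact_mod_cast hcard

theorem hasDensity_of_le_lowerDensity (hP : d ≤ lowerDensity P)
    (hnot : 1 - d ≤ lowerDensity fun n => ¬ P n) : HasDensity P d := by
  refine tendsto_order.2 ⟨le_lowerDensity_iff.1 hP, fun c hc => ?_⟩
  filter_upwards [le_lowerDensity_iff.1 hnot (1 - c) (by linarith), eventually_ne_atTop 0]
    with N hN hN0
  linarith [relFreq_add_relFreq_not P hN0]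

theorem HasDensity.exists_mem {ι : Type*} {S : Finset ι} {R : ι → ℕ → Prop} {d : ι → ℝ}
    (hR : ∀ i ∈ S, HasDensity (R i) (d i))
    (hdisj : ∀ i ∈ S, ∀ j ∈ S, ∀ n, R i n → R j n → i = j) :
    HasDensity (fun n => ∃ i ∈ S, R i n) (∑ i ∈ S, d i) := by
  refine (tendsto_finsetSum S hR).congr fun N => ?_
  have hunion : (Finset.range N).filter (fun n => ∃ i ∈ S, R i n) =
      S.biUnion fun i => (Finset.range N).filter (R i) := by
    grind
  have hpairwise : (S : Set ι).PairwiseDisjoint fun i => (Finset.range N).filter (R i) := by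
    intro i hi j hj hij
    refine Finset.disjoint_left.2 fun n hni hnj => hij ?_
    exact hdisj i hi j hj n (Finset.mem_filter.1 hni).2 (Finset.mem_filter.1 hnj).2
  rw [relFreq_eq_card_div, hunion, Finset.card_biUnion hpairwise, Nat.cast_sum, Finset.sum_div]
  simp only [relFreq]

theorem tendsto_natCast_add_div_div_atTop {k : ℕ} (c : ℕ) :
    Tendsto (fun N : ℕ => (((N + c) / k : ℕ) : ℝ) / N) atTop (𝓝 (1 / k)) := by
  have hfloor : Tendsto (fun N : ℕ => (((N + c) / k : ℕ) : ℝ) / (N + c : ℕ)) atTop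
      (𝓝 (1 / k)) := by
    refine ((tendsto_nat_floor_mul_div_atTop (R := ℝ) (a := 1 / k) (by positivity)).comp
      (tendsto_natCast_atTop_atTop.comp (tendsto_add_atTop_nat c))).congr fun N => ?_
    simp only [Function.comp_apply, one_div_mul_eq_div, Nat.floor_div_eq_div]
  have hshift : Tendsto (fun N : ℕ => ((N + c : ℕ) : ℝ) / N) atTop (𝓝 1) := by
    have h := (tendsto_const_div_atTop_nhds_zero_nat (c : ℝ)).const_add 1
    rw [add_zero] at h
    refine h.congr' ?_
    filter_upwards [eventually_ne_atTop 0] with N hN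
    rw [Nat.cast_add, add_div, div_self (Nat.cast_ne_zero.2 hN)]
  have h := hfloor.mul hshift
  rw [mul_one] at h
  refine h.congr' ?_
  filter_upwards [eventually_ne_atTop 0] with N hN
  exact div_mul_div_cancel₀ (Nat.cast_ne_zero.2 (by omega))

theorem card_filter_exists_mul_add {k r : ℕ} (hr : r < k) (N : ℕ) :
    ((Finset.range N).filter fun n => ∃ m, n = k * m + r ∧ P m).card =
      ((Finset.range ((N + (k - 1 - r)) / k)).filter P).card := by
  have hk : 0 < k := hr.pos
  have himage : ((Finset.range N).filter fun n => ∃ m, n = k * m + r ∧ P m) =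
      ((Finset.range ((N + (k - 1 - r)) / k)).filter P).image fun m => k * m + r := by
    have hlt : ∀ m, m < (N + (k - 1 - r)) / k ↔ k * m + r < N := fun m => by
      rw [← Nat.succ_le_iff, Nat.le_div_iff_mul_le hk, Nat.succ_mul, mul_comm m k]
      omega
    ext n
    simp only [Finset.mem_filter, Finset.mem_range, Finset.mem_image, hlt]
    grind
  rw [himage, Finset.card_image_of_injective]
  exact fun m m' h => Nat.eq_of_mul_eq_mul_left hk (Nat.add_right_cancel h)

theorem HasDensity.exists_mul_add (hP : HasDensity P d) {k r : ℕ} (hr : r < k) :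
    HasDensity (fun n => ∃ m, n = k * m + r ∧ P m) (d / k) := by
  have htop : Tendsto (fun N : ℕ => (N + (k - 1 - r)) / k) atTop atTop :=
    (Nat.tendsto_div_const_atTop hr.pos.ne').comp (tendsto_add_atTop_nat _)
  rw [div_eq_mul_one_div]
  refine ((hP.comp htop).mul (tendsto_natCast_add_div_div_atTop (k - 1 - r))).congr fun N => ?_
  rw [relFreq_eq_card_div, card_filter_exists_mul_add hr, Function.comp_apply, relFreq]
  rcases eq_or_ne ((N + (k - 1 - r)) / k) 0 with hzero | hne
  · simp [hzero]
  · exact div_mul_div_cancel₀ (Nat.cast_ne_zero.2 hne)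

theorem hasDensity_of_residueClasses {k : ℕ} (hk : 0 < k) {d : ℕ → ℝ}
    (h : ∀ r < k, HasDensity (fun n => P (k * n + r)) (d r)) :
    HasDensity P ((∑ r ∈ Finset.range k, d r) / k) := by
  have hunion := HasDensity.exists_mem (S := Finset.range k)
    (fun r hr => (h r (Finset.mem_range.1 hr)).exists_mul_add (Finset.mem_range.1 hr))
    (by
      rintro r hr r' hr' _ ⟨m, rfl, -⟩ ⟨m', h, -⟩
      simpa [Nat.mod_eq_of_lt (Finset.mem_range.1 hr), Nat.mod_eq_of_lt (Finset.mem_range.1 hr')]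
        using congrArg (· % k) h)
  rw [← Finset.sum_div] at hunion
  convert hunion using 2 with n
  refine ⟨fun hn => ⟨n % k, Finset.mem_range.2 (n.mod_lt hk), n / k, (n.div_add_mod k).symm, ?_⟩,
    ?_⟩
  · rwa [Nat.div_add_mod]
  · rintro ⟨r, -, m, rfl, hP⟩
    exact hP

theorem hasDensity_of_even_odd (heven : HasDensity (fun n => P (2 * n)) d)
    (hodd : HasDensity (fun n => P (2 * n + 1)) d) : HasDensity P d := by
  have h := hasDensity_of_residueClasses (P := P) two_pos (d := fun _ => d) (by
    intro r hr
    interval_cases r <;> assumption)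
  simpa using h

end Density

section Equidistribution

variable {k : ℕ}

/-- The `j`-th of the `k` equal arcs of the unit circle, shrunk by `δ` at both ends. -/
def shrunkArc (k : ℕ) (δ : ℝ) (j : Fin k) : Set ℝ :=
  Set.Icc ((j : ℝ) / k + δ) (((j : ℝ) + 1) / k - δ)

theorem eq_of_mem_shrunkArc {δ t : ℝ} (hδ : 0 < δ) {i j : Fin k}
    (hi : t ∈ shrunkArc k δ i) (hj : t ∈ shrunkArc k δ j) : i = j := by
  have hk : (0 : ℝ) < k := Nat.cast_pos.2 i.pos
  have hij : (i : ℝ) / k < ((j : ℝ) + 1) / k := by linarith [hi.1, hj.2]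
  have hji : (j : ℝ) / k < ((i : ℝ) + 1) / k := by linarith [hj.1, hi.2]
  rw [div_lt_div_iff_of_pos_right hk] at hij hji
  norm_cast at hij hji
  omega

theorem shrunkArc_subset_Ioo {δ : ℝ} (hδ : 0 < δ) (j : Fin k) :
    shrunkArc k δ j ⊆ Set.Ioo ((j : ℝ) / k) (((j : ℝ) + 1) / k) :=
  Set.Icc_subset_Ioo (by linarith) (by linarith)

/-- The cells of the `k × k` grid on the torus, shrunk by `δ` on each side. -/
def shrunkCell (k : ℕ) (δ : ℝ) (p : Fin k × Fin k) : Set (ℝ × ℝ) :=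
  shrunkArc k δ p.1 ×ˢ shrunkArc k δ p.2

variable {a b : ℕ → ℝ} {P : ℕ → Prop} {S : Finset (Fin k × Fin k)}

namespace EquidistributedMod1Pair

theorem hasDensity_mem_shrunkCell (hab : EquidistributedMod1Pair a b) {δ : ℝ} (hδ : 0 ≤ δ)
    (hδk : 2 * δ ≤ 1 / k) (p : Fin k × Fin k) :
    HasDensity (fun n => (Int.fract (a n), Int.fract (b n)) ∈ shrunkCell k δ p)
      ((1 / k - 2 * δ) ^ 2) := by
  have hk : (0 : ℝ) < k := Nat.cast_pos.2 p.1.pos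
  have hlength (j : Fin k) : ((j : ℝ) + 1) / k = (j : ℝ) / k + 1 / k := add_div _ _ _
  have hstart (j : Fin k) : 0 ≤ (j : ℝ) / k := by positivity
  have hend (j : Fin k) : ((j : ℝ) + 1) / k ≤ 1 := by
    rw [div_le_one hk]
    exact_mod_cast j.2
  have h := hab ((p.1 : ℝ) / k + δ) (((p.1 : ℝ) + 1) / k - δ) ((p.2 : ℝ) / k + δ)
    (((p.2 : ℝ) + 1) / k - δ) (by linarith [hstart p.1]) (by linarith [hlength p.1])
    (by linarith [hend p.1]) (by linarith [hstart p.2]) (by linarith [hlength p.2])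
    (by linarith [hend p.2])
  have harea : (((p.1 : ℝ) + 1) / k - δ - ((p.1 : ℝ) / k + δ)) *
      (((p.2 : ℝ) + 1) / k - δ - ((p.2 : ℝ) / k + δ)) = (1 / k - 2 * δ) ^ 2 := by ring
  rw [harea] at h
  refine h.congr fun N => ?_
  exact (relFreq_eq_card_div _ N).symm

theorem hasDensity_exists_mem_shrunkCell (hab : EquidistributedMod1Pair a b) {δ : ℝ} (hδ : 0 < δ)
    (hδk : 2 * δ ≤ 1 / k) (S : Finset (Fin k × Fin k)) :
    HasDensity (fun n => ∃ p ∈ S, (Int.fract (a n), Int.fract (b n)) ∈ shrunkCell k δ p)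
      (S.card * (1 / k - 2 * δ) ^ 2) := by
  rw [← nsmul_eq_mul, ← Finset.sum_const]
  exact HasDensity.exists_mem (fun p _ => hab.hasDensity_mem_shrunkCell hδ.le hδk p)
    fun p _ q _ _ hp hq =>
      Prod.ext (eq_of_mem_shrunkArc hδ hp.1 hq.1) (eq_of_mem_shrunkArc hδ hp.2 hq.2)

theorem card_div_sq_le_lowerDensity (hab : EquidistributedMod1Pair a b) (hk : 0 < k)
    (hS : ∀ δ > 0, ∀ᶠ n in atTop, ∀ p ∈ S,
      (Int.fract (a n), Int.fract (b n)) ∈ shrunkCell k δ p → P n) :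
    (S.card : ℝ) / k ^ 2 ≤ lowerDensity P := by
  have hlim : Tendsto (fun δ : ℝ => (S.card : ℝ) * (1 / k - 2 * δ) ^ 2) (𝓝[>] 0)
      (𝓝 ((S.card : ℝ) / k ^ 2)) := by
    have hcont : Continuous fun δ : ℝ => (S.card : ℝ) * (1 / k - 2 * δ) ^ 2 := by fun_prop
    convert (hcont.tendsto 0).mono_left nhdsWithin_le_nhds using 2
    ring
  refine le_of_tendsto hlim ?_
  have hpos : (0 : ℝ) < 1 / (2 * k) := by positivity
  filter_upwards [Ioo_mem_nhdsGT hpos] with δ hδ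
  have hδk : 2 * δ ≤ 1 / k := by
    calc 2 * δ ≤ 2 * (1 / (2 * k)) := by linarith [hδ.2]
      _ = 1 / k := by ring
  exact (hab.hasDensity_exists_mem_shrunkCell hδ.1 hδk S).le_lowerDensity
    ((hS δ hδ.1).mono fun n hn ⟨p, hpS, hp⟩ => hn p hpS hp)

theorem hasDensity_of_shrunkCell (hab : EquidistributedMod1Pair a b) (hk : 0 < k)
    (hP : ∀ δ > 0, ∀ᶠ n in atTop, ∀ p,
      (Int.fract (a n), Int.fract (b n)) ∈ shrunkCell k δ p → (P n ↔ p ∈ S)) :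
    HasDensity P (S.card / k ^ 2) := by
  refine hasDensity_of_le_lowerDensity (hab.card_div_sq_le_lowerDensity hk fun δ hδ =>
    (hP δ hδ).mono fun n hn p hpS hp => (hn p hp).2 hpS) ?_
  have hcompl : 1 - (S.card : ℝ) / k ^ 2 = (Sᶜ.card : ℝ) / k ^ 2 := by
    have hcard : ((S.card + Sᶜ.card : ℕ) : ℝ) = k ^ 2 := by
      rw [Finset.card_add_card_compl]
      simp [sq]
    push_cast at hcard
    field_simp
    linarith
  rw [hcompl]
  exact hab.card_div_sq_le_lowerDensity hk fun δ hδ =>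
    (hP δ hδ).mono fun n hn p hpS hp hPn => Finset.mem_compl.1 hpS ((hn p hp).1 hPn)

end EquidistributedMod1Pair

end Equidistribution

section Sign

theorem sign_eq_sign_of_abs_sub_lt {u v : ℝ} (h : |u - v| < |v|) :
    SignType.sign u = SignType.sign v := by
  obtain ⟨hlow, hupp⟩ := abs_lt.1 h
  rcases le_total 0 v with hv | hv
  · rw [abs_of_nonneg hv] at hlow hupp
    rw [sign_pos (by linarith), sign_pos (by linarith)]
  · rw [abs_of_nonpos hv] at hlow hupp
    rw [sign_neg (by linarith), sign_neg (by linarith)]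

theorem eventually_sign_eq_sign_mul_sign {α : Type*} {l : Filter α} {A u t : α → ℝ} {g : ℝ → ℝ}
    {K : Set ℝ} (hK : IsCompact K) (hg : ContinuousOn g K) (hg0 : ∀ x ∈ K, g x ≠ 0)
    (hA : ∀ᶠ n in l, A n ≠ 0) (hu : (fun n => u n - A n * g (t n)) =o[l] A) :
    ∀ᶠ n in l, t n ∈ K → SignType.sign (u n) = SignType.sign (A n) * SignType.sign (g (t n)) := by
  obtain ⟨ε, hε, hεg⟩ := hK.exists_forall_le' hg.abs fun x hx => abs_pos.2 (hg0 x hx)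
  filter_upwards [hA, hu.def (half_pos hε)] with n hAn hun htK
  rw [← sign_mul]
  apply sign_eq_sign_of_abs_sub_lt
  calc |u n - A n * g (t n)| ≤ ε / 2 * |A n| := hun
    _ < ε * |A n| := by
      have := abs_pos.2 hAn
      gcongr
      exact half_lt_self hε
    _ ≤ |g (t n)| * |A n| := by
      gcongr
      exact hεg _ htK
    _ = |A n * g (t n)| := by rw [abs_mul, mul_comm]

theorem EquidistributedMod1Pair.hasDensity_sign_eq {a b : ℕ → ℝ}
    (hab : EquidistributedMod1Pair a b) {g : ℝ → ℝ} (hg : Continuous g)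
    (hper : Function.Periodic g 1) {k : ℕ} (hk : 0 < k) {s : Fin k → SignType}
    (hs : ∀ j, s j ≠ 0)
    (hgs : ∀ j : Fin k, ∀ t ∈ Set.Ioo ((j : ℝ) / k) (((j : ℝ) + 1) / k), SignType.sign (g t) = s j)
    {A u v : ℕ → ℝ} (hA : ∀ᶠ n in atTop, A n ≠ 0)
    (hu : (fun n => u n - A n * g (a n)) =o[atTop] A)
    (hv : (fun n => v n - A n * g (b n)) =o[atTop] A) :
    HasDensity (fun n => SignType.sign (u n) = SignType.sign (v n))
      ((Finset.univ.filter fun p : Fin k × Fin k => s p.1 = s p.2).card / k ^ 2) := by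
  refine hab.hasDensity_of_shrunkCell hk fun δ hδ => ?_
  have hfract : ∀ t, g t = g (Int.fract t) := fun t => by
    simpa only [mul_one, Int.self_sub_floor] using (hper.sub_int_mul_eq (x := t) ⌊t⌋).symm
  simp only [hfract (a _), hfract (b _)] at hu hv
  have hK : IsCompact (⋃ j, shrunkArc k δ j) := isCompact_iUnion fun j => isCompact_Icc
  have hgj : ∀ j, ∀ t ∈ shrunkArc k δ j, SignType.sign (g t) = s j := fun j t ht =>
    hgs j t (shrunkArc_subset_Ioo hδ j ht)
  have hg0 : ∀ t ∈ ⋃ j, shrunkArc k δ j, g t ≠ 0 := fun t ht => by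
    obtain ⟨j, hj⟩ := Set.mem_iUnion.1 ht
    exact sign_ne_zero.1 (hgj j t hj ▸ hs j)
  filter_upwards [hA, eventually_sign_eq_sign_mul_sign hK hg.continuousOn hg0 hA hu,
    eventually_sign_eq_sign_mul_sign hK hg.continuousOn hg0 hA hv] with n hAn hun hvn p hp
  rw [hun (Set.mem_iUnion_of_mem _ hp.1), hvn (Set.mem_iUnion_of_mem _ hp.2),
    hgj _ _ hp.1, hgj _ _ hp.2, mul_right_inj' (sign_ne_zero.2 hAn), Finset.mem_filter_univ]

theorem sign_cos_two_pi_mul (j : Fin 4) {t : ℝ}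
    (ht : t ∈ Set.Ioo ((j : ℝ) / 4) (((j : ℝ) + 1) / 4)) :
    SignType.sign (cos (2 * π * t)) = ![1, -1, -1, 1] j := by
  have hpi := pi_pos
  obtain ⟨h₁, h₂⟩ := ht
  fin_cases j <;> norm_num at h₁ h₂ ⊢
  · exact sign_pos (cos_pos_of_mem_Ioo ⟨by nlinarith, by nlinarith⟩)
  · exact sign_neg (cos_neg_of_pi_div_two_lt_of_lt (by nlinarith) (by nlinarith))
  · exact sign_neg (cos_neg_of_pi_div_two_lt_of_lt (by nlinarith) (by nlinarith))
  · rw [← cos_sub_two_pi]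
    exact sign_pos (cos_pos_of_mem_Ioo ⟨by nlinarith, by nlinarith⟩)

theorem sign_sin_two_pi_mul (j : Fin 2) {t : ℝ}
    (ht : t ∈ Set.Ioo ((j : ℝ) / 2) (((j : ℝ) + 1) / 2)) :
    SignType.sign (sin (2 * π * t)) = ![1, -1] j := by
  have hpi := pi_pos
  obtain ⟨h₁, h₂⟩ := ht
  fin_cases j <;> norm_num at h₁ h₂ ⊢
  · exact sign_pos (sin_pos_of_pos_of_lt_pi (by positivity) (by nlinarith))
  · rw [← sin_sub_two_pi]
    exact sign_neg (sin_neg_of_neg_of_neg_pi_lt (by nlinarith) (by nlinarith))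

end Sign

section Schrodinger

/-- `f` solves the Schrödinger equation `-f'' + q f = E f` with potential `q` and energy `E`. The
derivative `f'` is carried along, so that the equation can hold at every point without regularity
assumptions on `q`. -/
structure IsSchrodingerSolution (q : ℝ → ℝ) (E : ℝ) (f f' : ℝ → ℝ) : Prop where
  hasDerivAt : ∀ t, HasDerivAt f (f' t) t
  hasDerivAt' : ∀ t, HasDerivAt f' ((q t - E) * f t) t

/-- The solution of `g'' = -ω² g` with `g 0 = a` and `g' 0 = b`, provided that `ω ≠ 0`. -/
noncomputable def freeSolution (ω a b t : ℝ) : ℝ :=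
  a * cos (ω * t) + b / ω * sin (ω * t)

theorem abs_freeSolution_le (ω a b t : ℝ) : |freeSolution ω a b t| ≤ |a| + |b / ω| := by
  calc |freeSolution ω a b t| ≤ |a * cos (ω * t)| + |b / ω * sin (ω * t)| := abs_add_le _ _
    _ = |a| * |cos (ω * t)| + |b / ω| * |sin (ω * t)| := by rw [abs_mul, abs_mul]
    _ ≤ |a| * 1 + |b / ω| * 1 := by
      gcongr
      · exact abs_cos_le_one _
      · exact abs_sin_le_one _
    _ = |a| + |b / ω| := by ring

namespace IsSchrodingerSolution

variable {q f f' : ℝ → ℝ} {ω x₀ x : ℝ}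

theorem continuous {E : ℝ} (hf : IsSchrodingerSolution q E f f') : Continuous f :=
  continuous_iff_continuousAt.2 fun t => (hf.hasDerivAt t).continuousAt

theorem sub_freeSolution_eq_integral (hf : IsSchrodingerSolution q (ω ^ 2) f f') (hω : ω ≠ 0)
    (hq : IntervalIntegrable q volume x₀ x) :
    f x - freeSolution ω (f x₀) (f' x₀) (x - x₀) =
      ∫ t in x₀..x, q t * (f t * (sin (ω * (x - t)) / ω)) := by
  have hcont := hf.continuous
  have hderiv : ∀ t, HasDerivAt
      (fun t => f t * cos (ω * (x - t)) + f' t * (sin (ω * (x - t)) / ω))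
      (q t * (f t * (sin (ω * (x - t)) / ω))) t := by
    intro t
    have hphase : HasDerivAt (fun t : ℝ => ω * (x - t)) (ω * (-1)) t :=
      ((hasDerivAt_id t).const_sub x).const_mul ω
    refine (((hf.hasDerivAt t).mul hphase.cos).add
      ((hf.hasDerivAt' t).mul (hphase.sin.div_const ω))).congr_deriv ?_
    field_simp
    ring
  have hint : IntervalIntegrable (fun t => q t * (f t * (sin (ω * (x - t)) / ω))) volume x₀ x :=
    hq.mul_continuousOn (by fun_prop)
  rw [intervalIntegral.integral_eq_sub_of_hasDerivAt (fun t _ => hderiv t) hint, freeSolution]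
  simp only [sub_self, mul_zero, cos_zero, sin_zero, zero_div]
  ring

theorem abs_sub_freeSolution_le_mul (hf : IsSchrodingerSolution q (ω ^ 2) f f') (hω : 0 < ω)
    (hq : IntervalIntegrable q volume x₀ x) {M : ℝ} (hM : ∀ t ∈ Set.uIcc x₀ x, |f t| ≤ M) :
    |f x - freeSolution ω (f x₀) (f' x₀) (x - x₀)| ≤ |∫ t in x₀..x, ‖q t‖| * (M / ω) := by
  have hM0 : 0 ≤ M := (abs_nonneg _).trans (hM x₀ Set.left_mem_uIcc)
  have hbound : ∀ t ∈ Set.uIoc x₀ x, ‖q t * (f t * (sin (ω * (x - t)) / ω))‖ ≤ ‖q t‖ * (M / ω) := by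
    intro t ht
    have htM := hM t (Set.uIoc_subset_uIcc ht)
    rw [norm_mul, norm_eq_abs (f t * _), abs_mul, abs_div, abs_of_pos hω, div_eq_mul_inv M]
    have hsin : |sin (ω * (x - t))| / ω ≤ ω⁻¹ := by
      rw [← one_div]
      gcongr
      exact abs_sin_le_one _
    gcongr
  rw [hf.sub_freeSolution_eq_integral hω.ne' hq, ← norm_eq_abs]
  refine (intervalIntegral.norm_integral_le_abs_of_norm_le
    (ae_restrict_of_forall_mem measurableSet_uIoc hbound) (hq.norm.mul_const _)).trans ?_
  rw [intervalIntegral.integral_mul_const, abs_mul, abs_of_nonneg (by positivity : 0 ≤ M / ω)]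

theorem abs_sub_freeSolution_le (hf : IsSchrodingerSolution q (ω ^ 2) f f') (hω : 0 < ω)
    (hq : IntervalIntegrable q volume x₀ x) (hqω : 2 * |∫ t in x₀..x, ‖q t‖| ≤ ω) :
    |f x - freeSolution ω (f x₀) (f' x₀) (x - x₀)| ≤
      2 * |∫ t in x₀..x, ‖q t‖| / ω * (|f x₀| + |f' x₀ / ω|) := by
  set I := |∫ t in x₀..x, ‖q t‖|
  obtain ⟨m, hm, hmax⟩ := isCompact_uIcc.exists_isMaxOn Set.nonempty_uIcc
    hf.continuous.abs.continuousOn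
  have hsub : ∀ z ∈ Set.uIcc x₀ x,
      |f z - freeSolution ω (f x₀) (f' x₀) (z - x₀)| ≤ I * (|f m| / ω) := by
    intro z hz
    have hzx := Set.uIcc_subset_uIcc_left hz
    refine (hf.abs_sub_freeSolution_le_mul hω (hq.mono_set hzx) fun t ht =>
      hmax (hzx ht)).trans ?_
    gcongr
    exact intervalIntegral.abs_integral_mono_interval
      (Set.uIoc_subset_uIoc_of_uIcc_subset_uIcc hzx) (.of_forall fun t => norm_nonneg _) hq.norm
  -- At the maximum point the correction is at most half of `|f m|`, so it can be absorbed.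
  have hfm : |f m| ≤ 2 * (|f x₀| + |f' x₀ / ω|) := by
    have hhalf : I * (|f m| / ω) ≤ |f m| / 2 := by
      rw [mul_div_assoc', div_le_div_iff₀ hω two_pos]
      nlinarith [abs_nonneg (f m)]
    have htriangle := abs_sub_abs_le_abs_sub (f m) (freeSolution ω (f x₀) (f' x₀) (m - x₀))
    linarith [hsub m hm, abs_freeSolution_le ω (f x₀) (f' x₀) (m - x₀)]
  calc |f x - freeSolution ω (f x₀) (f' x₀) (x - x₀)| ≤ I * (|f m| / ω) := hsub x Set.right_mem_uIcc
    _ ≤ I * (2 * (|f x₀| + |f' x₀ / ω|) / ω) := by gcongr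
    _ = 2 * I / ω * (|f x₀| + |f' x₀ / ω|) := by ring

theorem isLittleO_sub_freeSolution {ι : Type*} {l : Filter ι} {ω : ι → ℝ} {f f' : ι → ℝ → ℝ}
    (hf : ∀ᶠ i in l, IsSchrodingerSolution q (ω i ^ 2) (f i) (f' i)) (hω : Tendsto ω l atTop)
    (hq : IntervalIntegrable q volume x₀ x) :
    (fun i => f i x - freeSolution (ω i) (f i x₀) (f' i x₀) (x - x₀)) =o[l]
      fun i => |f i x₀| + |f' i x₀ / ω i| := by
  refine isLittleO_iff.2 fun ε hε => ?_
  set I := |∫ t in x₀..x, ‖q t‖|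
  filter_upwards [hf, hω.eventually_gt_atTop 0, hω.eventually_ge_atTop (2 * I),
    hω.eventually_ge_atTop (2 * I / ε)] with i hfi hωi hωI hωε
  rw [norm_eq_abs, norm_of_nonneg (by positivity)]
  refine (hfi.abs_sub_freeSolution_le hωi hq hωI).trans ?_
  gcongr
  rw [div_le_iff₀ hωi]
  rwa [div_le_iff₀' hε] at hωε

end IsSchrodingerSolution

variable {q : ℝ → ℝ} {ν : ℕ → ℝ} {f f' : ℕ → ℝ → ℝ} {x y : ℝ}

theorem hasDensity_sign_eq_of_deriv_zero (hq : LocallyIntegrable q volume)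
    (hν : Tendsto ν atTop atTop)
    (hf : ∀ᶠ n in atTop, IsSchrodingerSolution q ((2 * π * ν n) ^ 2) (f n) (f' n))
    (hf0 : ∀ n, f n 0 ≠ 0) (hf'0 : ∀ n, f' n 0 = 0)
    (hequi : EquidistributedMod1Pair (fun n => ν n * x) (fun n => ν n * y)) :
    HasDensity (fun n => SignType.sign (f n x) = SignType.sign (f n y)) (1 / 2) := by
  have hasymp (z : ℝ) :
      (fun n => f n z - f n 0 * cos (2 * π * (ν n * z))) =o[atTop] fun n => f n 0 := by
    have h := IsSchrodingerSolution.isLittleO_sub_freeSolution (x₀ := 0) (x := z) hf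
      (hν.const_mul_atTop two_pi_pos) (hq.integrableOn_isCompact isCompact_uIcc).intervalIntegrable
    simpa only [freeSolution, hf'0, zero_div, zero_mul, add_zero, abs_zero, sub_zero, mul_assoc,
      isLittleO_abs_right] using h
  have hcard : (Finset.univ.filter fun p : Fin 4 × Fin 4 =>
      (![1, -1, -1, 1] : Fin 4 → SignType) p.1 = ![1, -1, -1, 1] p.2).card = 8 := by
    decide
  have h := hequi.hasDensity_sign_eq (g := fun t => cos (2 * π * t)) (by fun_prop)
    (fun t => by simp only [mul_add, mul_one, cos_add_two_pi]) four_pos (by decide)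
    (fun j t => sign_cos_two_pi_mul j) (.of_forall hf0) (hasymp x) (hasymp y)
  rw [hcard] at h
  convert h using 1
  norm_num

theorem hasDensity_sign_eq_of_zero (hq : LocallyIntegrable q volume)
    (hν : Tendsto ν atTop atTop)
    (hf : ∀ᶠ n in atTop, IsSchrodingerSolution q ((2 * π * ν n) ^ 2) (f n) (f' n))
    (hf0 : ∀ n, f n 0 = 0) (hf'0 : ∀ n, f' n 0 ≠ 0)
    (hequi : EquidistributedMod1Pair (fun n => ν n * x) (fun n => ν n * y)) :
    HasDensity (fun n => SignType.sign (f n x) = SignType.sign (f n y)) (1 / 2) := by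
  have hasymp (z : ℝ) :
      (fun n => f n z - f' n 0 / (2 * π * ν n) * sin (2 * π * (ν n * z))) =o[atTop]
        fun n => f' n 0 / (2 * π * ν n) := by
    have h := IsSchrodingerSolution.isLittleO_sub_freeSolution (x₀ := 0) (x := z) hf
      (hν.const_mul_atTop two_pi_pos) (hq.integrableOn_isCompact isCompact_uIcc).intervalIntegrable
    simpa only [freeSolution, hf0, zero_mul, zero_add, abs_zero, sub_zero, mul_assoc,
      isLittleO_abs_right] using h
  have hcard : (Finset.univ.filter fun p : Fin 2 × Fin 2 =>
      (![1, -1] : Fin 2 → SignType) p.1 = ![1, -1] p.2).card = 2 := by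
    decide
  have hne : ∀ᶠ n in atTop, f' n 0 / (2 * π * ν n) ≠ 0 := by
    filter_upwards [hν.eventually_gt_atTop 0] with n hn
    exact div_ne_zero (hf'0 n) (by positivity)
  have h := hequi.hasDensity_sign_eq (g := fun t => sin (2 * π * t)) (by fun_prop)
    (fun t => by simp only [mul_add, mul_one, sin_add_two_pi]) two_pos (by decide)
    (fun j t => sign_sin_two_pi_mul j) hne (hasymp x) (hasymp y)
  rw [hcard] at h
  convert h using 1
  norm_num

end Schrodinger

theorem sgn_eq_sgn_iff {u v : ℝ} : sgn u = sgn v ↔ SignType.sign u = SignType.sign v := by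
  have hsgn : ∀ t, sgn t = (SignType.sign t : ℝ) := fun t => by
    rw [sgn, sign_apply]
    split_ifs <;> simp
  have hcast : Function.Injective ((↑) : SignType → ℝ) := by
    rintro (_ | _ | _) (_ | _ | _) <;> norm_num
  rw [hsgn, hsgn, hcast.eq_iff]

theorem ne_zero_of_sgn_eq_neg_one_pow {u : ℝ} {n : ℕ} (h : sgn u = (-1) ^ n) : u ≠ 0 := by
  rintro rfl
  rw [sgn, if_neg (lt_irrefl 0), if_neg (lt_irrefl 0)] at h
  exact pow_ne_zero n (by norm_num) h.symm

theorem deriv_zero_eq_zero_of_even {f : ℝ → ℝ} (hf : f.Even) : deriv f 0 = 0 := by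
  have h := deriv_comp_neg f 0
  rw [funext hf, neg_zero] at h
  exact self_eq_neg.1 h

theorem schrodinger_sign_correlation_irrational_general
    {V : ℝ → ℝ} (hV : LocallyIntegrable V volume)
    {lam : ℕ → ℝ} (hlam : Tendsto lam atTop atTop) {w w' : ℕ → ℝ → ℝ}
    (hw' : ∀ n x, HasDerivAt (w n) (w' n x) x)
    (hODE : ∀ n x, HasDerivAt (w' n) (4 * π ^ 2 * (V x - lam n) * w n x) x)
    (heven : ∀ n, w (2 * n) 0 ≠ 0) (heven' : ∀ n, w' (2 * n) 0 = 0)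
    (hodd : ∀ n, w (2 * n + 1) 0 = 0) (hodd' : ∀ n, w' (2 * n + 1) 0 ≠ 0) {x y : ℝ}
    (hequiEven : EquidistributedMod1Pair
      (fun n => √(lam (2 * n)) * x) (fun n => √(lam (2 * n)) * y))
    (hequiOdd : EquidistributedMod1Pair
      (fun n => √(lam (2 * n + 1)) * x) (fun n => √(lam (2 * n + 1)) * y)) :
    HasDensity (fun n => sgn (w n x) = sgn (w n y)) (1 / 2) := by
  have hν : Tendsto (fun n => √(lam n)) atTop atTop := tendsto_sqrt_atTop.comp hlam
  have hsol : ∀ᶠ n in atTop, IsSchrodingerSolution (fun t => 4 * π ^ 2 * V t)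
      ((2 * π * √(lam n)) ^ 2) (w n) (w' n) := by
    filter_upwards [hlam.eventually_ge_atTop 0] with n hn
    refine ⟨hw' n, fun t => (hODE n t).congr_deriv ?_⟩
    rw [mul_pow, sq_sqrt hn]
    ring
  have htwo : Tendsto (fun n : ℕ => 2 * n) atTop atTop := tendsto_id.const_mul_atTop' two_pos
  have htwo' : Tendsto (fun n : ℕ => 2 * n + 1) atTop atTop := (tendsto_add_atTop_nat 1).comp htwo
  have hq : LocallyIntegrable (fun t => 4 * π ^ 2 * V t) volume := hV.smul (4 * π ^ 2)
  simp only [sgn_eq_sgn_iff]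
  exact hasDensity_of_even_odd
    (hasDensity_sign_eq_of_deriv_zero hq (hν.comp htwo) (htwo.eventually hsol) heven heven'
      hequiEven)
    (hasDensity_sign_eq_of_zero hq (hν.comp htwo') (htwo'.eventually hsol) hodd hodd'
      hequiOdd)

theorem schrodinger_sign_correlation_irrational
    (V : ℝ → ℝ) (hVloc : LocallyIntegrable V volume)
    (hVeven : ∀ x, V (-x) = V x)
    (hVbelow : ∃ c : ℝ, ∀ᵐ x : ℝ, c ≤ V x)
    (hVinfty : Tendsto V (cocompact ℝ) atTop)
    (lam : ℕ → ℝ) (hlampos : ∀ n, 0 < lam n) (hlam : Tendsto lam atTop atTop)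
    (w w' : ℕ → ℝ → ℝ)
    (hw' : ∀ n x, HasDerivAt (w n) (w' n x) x)
    (hODE : ∀ n x, HasDerivAt (w' n) (4 * π ^ 2 * (V x - lam n) * w n x) x)
    (H1even : ∀ n, Even n → ∀ x, w n (-x) = w n x)
    (H1odd : ∀ n, Odd n → ∀ x, w n (-x) = - w n x)
    (H3even : ∀ n : ℕ, sgn (w (2 * n) 0) = (-1 : ℝ) ^ n)
    (H3odd : ∀ n : ℕ, sgn (w' (2 * n + 1) 0) = (-1 : ℝ) ^ n)
    (x y : ℝ) (hirr : Irrational (x / y))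
    (hequiEven : EquidistributedMod1Pair
      (fun n => Real.sqrt (lam (2 * n)) * x) (fun n => Real.sqrt (lam (2 * n)) * y))
    (hequiOdd : EquidistributedMod1Pair
      (fun n => Real.sqrt (lam (2 * n + 1)) * x) (fun n => Real.sqrt (lam (2 * n + 1)) * y)) :
    Tendsto (fun N : ℕ =>
      (((Finset.range N).filter (fun n => sgn (w n x) = sgn (w n y))).card : ℝ) / N)
      atTop (nhds (1/2)) := by
  exact schrodinger_sign_correlation_irrational_general hVloc hlam hw' hODE
    (fun n => ne_zero_of_sgn_eq_neg_one_pow (H3even n))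
    (fun n => (hw' (2 * n) 0).deriv ▸ deriv_zero_eq_zero_of_even (H1even _ (even_two_mul n)))
    (fun n => Function.Odd.map_zero (H1odd _ (odd_two_mul_add_one n)))
    (fun n => ne_zero_of_sgn_eq_neg_one_pow (H3odd n)) hequiEven hequiOdd
end

section
/- Let d ≥ 1, let a = (a_1, …, a_d) ∈ ℝ^d, and suppose λ > 0 is such that λ·a_i ∈ ℤ for every i. Let f : ℝ → ℝ be a continuous 1-periodic function whose zero set in [0,1) is finite, let (μ_n) be a sequence of reals such that (μ_n/λ) is equidistributed modulo 1, and let s ∈ {−1, 1}^d. Define Ψ : ℝ^d → {0,1} by Ψ(u) = 1 if (sgn(f(u_1)), …, sgn(f(u_d))) equals s or −s, and Ψ(u) = 0 otherwise. Then (1/N) · #{0 ≤ n < N : (sgn(f(μ_n a_1)), …, sgn(f(μ_n a_d))) equals s or −s} → ∫₀¹ Ψ(λ t a_1, …, λ t a_d) dt as N → ∞. -/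
open Filter Real MeasureTheory
open scoped Classical

def EquidistributedMod1 (a : ℕ → ℝ) : Prop :=
  ∀ c d : ℝ, 0 ≤ c → c ≤ d → d ≤ 1 →
    Tendsto (fun N : ℕ =>
      (((Finset.range N).filter (fun n => Int.fract (a n) ∈ Set.Icc c d)).card : ℝ) / N)
      atTop (nhds (d - c))

/-!
Intervals form a π-system, so equidistribution of `u` modulo 1 says that the empirical measures of
the fractional parts of `u` converge weakly to the uniform distribution on `[0, 1]`. By the
portmanteau theorem, `u` then visits every set with null frontier with the right frequency.

Put `k i = lam * a i ∈ ℤ` and `u n = μ n / lam`, so that `μ n * a i = k i * u n`. The sign vector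
`t ↦ (sgn (f (k i * t)))ᵢ` is 1-periodic and locally constant away from the zeros of
`t ↦ f (k i * t)` with `k i ≠ 0`, which form a null set, while the coordinates with `k i = 0` are
constant. Hence any set of times `t` defined by the sign vector has null frontier.
-/

/-- The probability measure giving mass `1 / (N + 1)` to each of `x 0, …, x N`; counting `N + 1`
points rather than `N` keeps the total mass equal to `1` for every `N`. -/
noncomputable def empiricalMeasure {Ω : Type*} [MeasurableSpace Ω] (x : ℕ → Ω) (N : ℕ) :
    ProbabilityMeasure Ω :=
  ⟨(N + 1 : ENNReal)⁻¹ • ∑ n ∈ Finset.range (N + 1), Measure.dirac (x n), ⟨by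
    simp [Measure.finsetSum_apply, ENNReal.inv_mul_cancel]⟩⟩

lemma coe_empiricalMeasure_apply {Ω : Type*} [MeasurableSpace Ω] [MeasurableSingletonClass Ω]
    (x : ℕ → Ω) (N : ℕ) (S : Set Ω) :
    (empiricalMeasure x N S : ℝ) =
      ((Finset.range (N + 1)).filter (fun n => x n ∈ S)).card / (N + 1 : ℕ) := by
  rw [ProbabilityMeasure.coeFn_def]
  simp [empiricalMeasure, Measure.finsetSum_apply, Set.indicator_apply, Finset.sum_boole,
    div_eq_inv_mul, ENNReal.toNNReal_add]

lemma tendsto_empiricalMeasure_apply_iff {Ω : Type*} [MeasurableSpace Ω]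
    [MeasurableSingletonClass Ω] {x : ℕ → Ω} {S : Set Ω} {p : NNReal} :
    Tendsto (fun N => empiricalMeasure x N S) atTop (nhds p) ↔
      Tendsto (fun N : ℕ => (((Finset.range N).filter (fun n => x n ∈ S)).card : ℝ) / N)
        atTop (nhds p) := by
  rw [← NNReal.tendsto_coe, ← tendsto_add_atTop_iff_nat (f := fun N : ℕ => (_ : ℝ) / N) 1]
  simp only [coe_empiricalMeasure_apply]

/-- The uniform distribution on `[0, 1]`, as a probability measure on the whole real line. -/
noncomputable def uniformUnitInterval : ProbabilityMeasure ℝ :=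
  ⟨volume.restrict (Set.Icc 0 1), ⟨by simp⟩⟩

lemma coe_uniformUnitInterval_apply (S : Set ℝ) :
    (uniformUnitInterval S : ℝ) = volume.real (S ∩ Set.Icc 0 1) :=
  measureReal_restrict_apply' measurableSet_Icc

lemma intervalIntegral_ite_eq_volume_real {P : ℝ → Prop} {a b : ℝ} (hab : a ≤ b)
    (hP : NullMeasurableSet {t | P t}) :
    (∫ t in a..b, if P t then (1 : ℝ) else 0) = volume.real ({t | P t} ∩ Set.Icc a b) := by
  calc (∫ t in a..b, if P t then (1 : ℝ) else 0)
      = ∫ t in Set.Icc a b, {t | P t}.indicator 1 t := by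
        rw [intervalIntegral.integral_of_le hab, ← integral_Icc_eq_integral_Ioc]
        simp only [Set.indicator_apply, Set.mem_ofPred_eq, Pi.one_apply]
    _ = volume.real ({t | P t} ∩ Set.Icc a b) := by
        rw [integral_indicator₀ (hP.mono Measure.restrict_le_self)]
        simp [measureReal_restrict_apply']

namespace EquidistributedMod1

variable {u : ℕ → ℝ}

lemma tendsto_empiricalMeasure_Icc (hu : EquidistributedMod1 u) (c d : ℝ) :
    Tendsto (fun N => empiricalMeasure (fun n => Int.fract (u n)) N (Set.Icc c d)) atTop
      (nhds (uniformUnitInterval (Set.Icc c d))) := by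
  rw [tendsto_empiricalMeasure_apply_iff, coe_uniformUnitInterval_apply]
  have hfract (n : ℕ) : Int.fract (u n) ∈ Set.Icc c d ↔
      Int.fract (u n) ∈ Set.Icc (max c 0) (min d 1) := by
    simp [Int.fract_nonneg, (Int.fract_lt_one _).le]
  simp only [hfract, Set.Icc_inter_Icc]
  rcases le_or_gt (max c 0) (min d 1) with hcd | hcd
  · simpa only [Real.volume_real_Icc_of_le hcd] using
      hu _ _ (le_max_right c 0) hcd (min_le_right d 1)
  · simp [Set.Icc_eq_empty_of_lt hcd]

lemma tendsto_empiricalMeasure (hu : EquidistributedMod1 u) :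
    Tendsto (empiricalMeasure fun n => Int.fract (u n)) atTop (nhds uniformUnitInterval) := by
  refine (isPiSystem_Icc (id : ℝ → ℝ) id).tendsto_probabilityMeasure_of_tendsto_of_mem ?_ ?_ ?_
  · rintro _ ⟨c, d, -, rfl⟩
    exact measurableSet_Icc
  · intro U hU x hx
    obtain ⟨c, d, hxcd, hnhds, hsub⟩ := exists_Icc_mem_subset_of_mem_nhds (hU.mem_nhds hx)
    exact ⟨_, ⟨c, d, hxcd.1.trans hxcd.2, rfl⟩, hnhds, hsub⟩
  · rintro _ ⟨c, d, -, rfl⟩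
    exact hu.tendsto_empiricalMeasure_Icc c d

lemma tendsto_frequency_of_null_frontier (hu : EquidistributedMod1 u) {S : Set ℝ}
    (hS : uniformUnitInterval (frontier S) = 0) :
    Tendsto (fun N : ℕ =>
      (((Finset.range N).filter (fun n => Int.fract (u n) ∈ S)).card : ℝ) / N)
      atTop (nhds (volume.real (S ∩ Set.Icc 0 1))) := by
  rw [← coe_uniformUnitInterval_apply]
  exact tendsto_empiricalMeasure_apply_iff.1
    (ProbabilityMeasure.tendsto_measure_of_null_frontier_of_tendsto hu.tendsto_empiricalMeasure hS)

lemma tendsto_frequency_of_periodic (hu : EquidistributedMod1 u) {P : ℝ → Prop}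
    (hP : Function.Periodic P 1) (hnull : volume (frontier {t | P t}) = 0) :
    Tendsto (fun N : ℕ => (((Finset.range N).filter (fun n => P (u n))).card : ℝ) / N)
      atTop (nhds (∫ t in (0 : ℝ)..1, if P t then (1 : ℝ) else 0)) := by
  have hfract (n : ℕ) : P (u n) ↔ Int.fract (u n) ∈ {t | P t} := by
    simpa using (hP.sub_int_mul_eq (x := u n) ⌊u n⌋).symm
  have hintegral : (∫ t in (0 : ℝ)..1, if P t then (1 : ℝ) else 0) =
      volume.real ({t | P t} ∩ Set.Icc 0 1) :=
    intervalIntegral_ite_eq_volume_real zero_le_one (nullMeasurableSet_of_null_frontier hnull)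
  simp only [hfract, hintegral]
  refine hu.tendsto_frequency_of_null_frontier ?_
  rw [← NNReal.coe_eq_zero, coe_uniformUnitInterval_apply, measureReal_def,
    measure_inter_null_of_null_left _ hnull, ENNReal.toReal_zero]

end EquidistributedMod1

lemma notMem_frontier_preimage_of_eventually_eq {X Y : Type*} [TopologicalSpace X] {g : X → Y}
    {x : X} (hg : ∀ᶠ y in nhds x, g y = g x) (A : Set Y) : x ∉ frontier (g ⁻¹' A) := by
  rw [frontier_eq_inter_compl_interior]
  rintro ⟨hx, hx'⟩
  by_cases hA : g x ∈ A
  · exact hx (mem_interior_iff_mem_nhds.2 (hg.mono fun y hy => by simpa [hy] using hA))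
  · exact hx' (mem_interior_iff_mem_nhds.2 (hg.mono fun y hy => by simpa [hy] using hA))

lemma eventually_sgn_eq {X : Type*} [TopologicalSpace X] {g : X → ℝ} {x : X}
    (hg : ContinuousAt g x) (hx : g x ≠ 0) : ∀ᶠ y in nhds x, sgn (g y) = sgn (g x) := by
  rcases hx.lt_or_gt with hneg | hpos
  · filter_upwards [hg.eventually_lt_const hneg] with y hy
    simp [sgn, hneg, hy, hneg.not_gt, hy.not_gt]
  · filter_upwards [hg.eventually_const_lt hpos] with y hy
    simp [sgn, hpos, hy]

lemma ae_of_periodic_of_ae_Ico {P : ℝ → Prop} {T c : ℝ} (hP : Function.Periodic P T) (hT : 0 < T)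
    (h : ∀ᵐ t, t ∈ Set.Ico c (c + T) → P t) : ∀ᵐ t, P t := by
  have htranslates : ∀ᵐ t, ∀ n : ℤ, t - n • T ∈ Set.Ico c (c + T) → P (t - n • T) :=
    ae_all_iff.2 fun n => (measurePreserving_sub_right volume (n • T)).quasiMeasurePreserving.ae h
  filter_upwards [htranslates] with t ht
  obtain ⟨n, hn, -⟩ := existsUnique_sub_zsmul_mem_Ico hT t c
  simpa only [hP.sub_zsmul_eq n] using ht n hn

lemma ae_comp_const_mul {P : ℝ → Prop} (hP : ∀ᵐ t, P t) {k : ℝ} (hk : k ≠ 0) :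
    ∀ᵐ t, P (k * t) := by
  rw [ae_iff] at hP ⊢
  simpa [hP] using Real.volume_preimage_mul_left hk {t | ¬P t}

lemma volume_frontier_sgn_comp_mul_mem_eq_zero {ι : Type*} [Finite ι] {f : ℝ → ℝ}
    (hf : Continuous f) (hzero : ∀ᵐ t, f t ≠ 0) (k : ι → ℝ) (A : Set (ι → ℝ)) :
    volume (frontier {t | (fun i => sgn (f (k i * t))) ∈ A}) = 0 := by
  have hne : ∀ᵐ t, ∀ i, k i ≠ 0 → f (k i * t) ≠ 0 :=
    ae_all_iff.2 fun i => eventually_imp_distrib_left.2 (ae_comp_const_mul hzero)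
  have hconst : ∀ᵐ t, ∀ᶠ y in nhds t,
      (fun i => sgn (f (k i * y))) = fun i => sgn (f (k i * t)) := by
    filter_upwards [hne] with t ht
    simp only [funext_iff, eventually_all]
    intro i
    by_cases hk : k i = 0
    · simp [hk]
    · exact eventually_sgn_eq (g := fun y => f (k i * y)) (by fun_prop) (ht i hk)
  exact measure_eq_zero_iff_ae_notMem.2
    (hconst.mono fun t ht => notMem_frontier_preimage_of_eventually_eq ht A)

theorem limit_lemma_general {ι : Type*} [Finite ι] (a : ι → ℝ) (lam : ℝ) (hlam : lam ≠ 0)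
    (hint : ∀ i, ∃ k : ℤ, lam * a i = (k : ℝ))
    (f : ℝ → ℝ) (hf : Continuous f) (hper : ∀ t, f (t + 1) = f t)
    (hzero : volume {t | t ∈ Set.Ico (0 : ℝ) 1 ∧ f t = 0} = 0)
    (μ : ℕ → ℝ) (hequi : EquidistributedMod1 (fun n => μ n / lam)) (A : Set (ι → ℝ)) :
    Tendsto (fun N : ℕ =>
      (((Finset.range N).filter (fun n => (fun i => sgn (f (μ n * a i))) ∈ A)).card : ℝ) / N)
      atTop (nhds (∫ t in (0 : ℝ)..1,
        if (fun i => sgn (f (lam * t * a i))) ∈ A then (1 : ℝ) else 0)) := by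
  choose k hk using hint
  have hscale (t : ℝ) (i : ι) : lam * t * a i = k i * t := by rw [← hk]; ring
  have hμ (n : ℕ) (i : ι) : μ n * a i = k i * (μ n / lam) := by rw [← hk]; field_simp
  have hperiodic : Function.Periodic (fun t => (fun i => sgn (f (k i * t))) ∈ A) 1 := by
    intro t
    have hi (i : ι) : f (k i * (t + 1)) = f (k i * t) := by
      rw [mul_add]
      exact Function.Periodic.int_mul hper (k i) _
    simp only [hi]
  have hnonzero : ∀ᵐ t, f t ≠ 0 := by
    refine ae_of_periodic_of_ae_Ico (T := 1) (c := 0) (fun t => by simp only [hper]) one_pos ?_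
    simpa [ae_iff, and_assoc] using hzero
  simp only [hscale, hμ]
  convert hequi.tendsto_frequency_of_periodic hperiodic
    (volume_frontier_sgn_comp_mul_mem_eq_zero hf hnonzero (fun i => (k i : ℝ)) A)

theorem limit_lemma
    (d : ℕ) (hd : 1 ≤ d) (a : Fin d → ℝ) (lam : ℝ) (hlam : 0 < lam)
    (hint : ∀ i, ∃ k : ℤ, lam * a i = (k : ℝ))
    (f : ℝ → ℝ) (hf : Continuous f) (hper : ∀ t, f (t + 1) = f t)
    (hzero : {t | t ∈ Set.Ico (0:ℝ) 1 ∧ f t = 0}.Finite)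
    (μ : ℕ → ℝ) (hequi : EquidistributedMod1 (fun n => μ n / lam))
    (s : Fin d → ℝ) (hs : ∀ i, s i = 1 ∨ s i = -1) :
    Tendsto (fun N : ℕ =>
      (((Finset.range N).filter (fun n =>
        (fun i => sgn (f (μ n * a i))) = s ∨
        (fun i => sgn (f (μ n * a i))) = fun i => -(s i))).card : ℝ) / N)
      atTop (nhds (∫ t in (0:ℝ)..1,
        (if (fun i => sgn (f (lam * t * a i))) = s ∨
            (fun i => sgn (f (lam * t * a i))) = (fun i => -(s i))
         then (1:ℝ) else 0))) := by
  convert limit_lemma_general a lam hlam.ne' hint f hf hper (hzero.measure_zero volume) μ hequi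
    {s, fun i => -(s i)} <;> rfl
end

section
/- Let a, b ∈ ℝ and define Φ : ℝ² → ℝ by Φ(u,v) = sgn(cos(2πu)·cos(2πv)). Then there exists a real number L such that (1/T)·∫₀ᵀ Φ(t, a·t + b) dt → L as T → ∞; moreover, if a is irrational then L = 0. -/
open Filter Real MeasureTheory

noncomputable def Φ (u v : ℝ) : ℝ := sgn (Real.cos (2 * π * u) * Real.cos (2 * π * v))

/-!
`Φ(t, at + b)` is the product of the values at `t` and at `at + b` of one square wave of period `1`.
If `a` is rational the product is periodic in `t`, and the time average of a periodic function is
its mean over one period. If `a` is irrational, replace the first factor by a Fourier mode of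
`ℝ / ℤ`: translation by `1 / a`, a period of the second factor, multiplies the new product by a
constant `w ≠ 1`, so its primitive is bounded and its time average vanishes (for the constant mode,
use instead that the second factor changes sign under translation by `1 / (2a)`). Trigonometric
polynomials are dense in `L¹` of the circle, and the `L¹` error of the approximation is itself the
time average of a periodic function.
-/

open Function Set Topology

section TimeAverage

variable {E : Type*} [NormedAddCommGroup E] {f g : ℝ → E}

lemma intervalIntegrable_of_norm_le {C : ℝ} (hf : AEStronglyMeasurable f) (hC : ∀ t, ‖f t‖ ≤ C)
    (x y : ℝ) : IntervalIntegrable f volume x y :=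
  intervalIntegrable_const.mono_fun' hf.restrict (ae_of_all _ hC)

lemma intervalIntegrable_smul_of_norm_le {𝕜 : Type*} [NormedRing 𝕜] [Module 𝕜 E]
    [IsBoundedSMul 𝕜 E] {φ : ℝ → 𝕜} {x y C : ℝ} (hφ : IntervalIntegrable φ volume x y)
    (hf : AEStronglyMeasurable f) (hC : ∀ t, ‖f t‖ ≤ C) :
    IntervalIntegrable (fun t => φ t • f t) volume x y :=
  ⟨hφ.1.smul_bdd C hf.restrict (ae_of_all _ hC), hφ.2.smul_bdd C hf.restrict (ae_of_all _ hC)⟩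

variable [NormedSpace ℝ E] {L M : E}

/-- `f` has time average (asymptotic mean) `L`: its mean over `[0, T]` tends to `L` as
`T → ∞`. Meaningful for locally integrable `f`. -/
def HasTimeAverage (f : ℝ → E) (L : E) : Prop :=
  Tendsto (fun T : ℝ => T⁻¹ • ∫ t in (0 : ℝ)..T, f t) atTop (𝓝 L)

lemma HasTimeAverage.add (hf : HasTimeAverage f L) (hg : HasTimeAverage g M)
    (hfi : ∀ T, IntervalIntegrable f volume 0 T) (hgi : ∀ T, IntervalIntegrable g volume 0 T) :
    HasTimeAverage (fun t => f t + g t) (L + M) := by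
  refine (Tendsto.add hf hg).congr fun T => ?_
  rw [intervalIntegral.integral_add (hfi T) (hgi T), smul_add]

lemma HasTimeAverage.const_smul {𝕜 : Type*} [NormedDivisionRing 𝕜] [Module 𝕜 E]
    [NormSMulClass 𝕜 E] [SMulCommClass ℝ 𝕜 E] (hf : HasTimeAverage f L) (c : 𝕜) :
    HasTimeAverage (fun t => c • f t) (c • L) := by
  refine (Tendsto.const_smul hf c).congr fun T => ?_
  rw [intervalIntegral.integral_smul, smul_comm T⁻¹]

lemma hasTimeAverage_ofReal_iff {u : ℝ → ℝ} {l : ℝ} :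
    HasTimeAverage (fun t => (u t : ℂ)) l ↔ HasTimeAverage u l := by
  simp only [HasTimeAverage, intervalIntegral.integral_ofReal, Complex.real_smul, smul_eq_mul,
    ← Complex.ofReal_mul, tendsto_ofReal_iff]

lemma hasTimeAverage_of_norm_integral_sub_le {B : ℝ}
    (h : ∀ T, ‖(∫ t in (0 : ℝ)..T, f t) - T • L‖ ≤ B) : HasTimeAverage f L := by
  have hdefect : Tendsto (fun T : ℝ => T⁻¹ • ((∫ t in (0 : ℝ)..T, f t) - T • L)) atTop (𝓝 0) :=
    tendsto_inv_atTop_zero.zero_smul_isBoundedUnder_le (isBoundedUnder_of ⟨B, h⟩)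
  refine tendsto_sub_nhds_zero_iff.1 (hdefect.congr' ?_)
  filter_upwards [eventually_ne_atTop 0] with T hT
  rw [smul_sub, inv_smul_smul₀ hT]

lemma hasTimeAverage_of_periodic {P : ℝ} (hP : P ≠ 0) (hf : Periodic f P)
    (hfi : IntervalIntegrable f volume 0 P) :
    HasTimeAverage f (P⁻¹ • ∫ t in (0 : ℝ)..P, f t) := by
  have hint := hf.intervalIntegrable₀ hP hfi
  set L := P⁻¹ • ∫ t in (0 : ℝ)..P, f t with hL
  have hper : Periodic (fun T => (∫ t in (0 : ℝ)..T, f t) - T • L) P := fun T => by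
    simp only [hf.intervalIntegral_add_eq_add 0 T hint, zero_add, add_smul]
    rw [hL, smul_inv_smul₀ hP, add_sub_add_right_eq_sub]
  have hcont : Continuous fun T => (∫ t in (0 : ℝ)..T, f t) - T • L :=
    (intervalIntegral.continuous_primitive hint 0).sub (by fun_prop)
  obtain ⟨B, hB⟩ := (hper.isBounded_of_continuous hP hcont).exists_norm_le
  exact hasTimeAverage_of_norm_integral_sub_le fun T => hB _ (mem_range_self T)

-- Translating `∫₀ᵀ f` by `c` multiplies it by `w`, but changes it only near the two endpoints.
lemma hasTimeAverage_zero_of_add_eq_smul {𝕜 : Type*} [NormedDivisionRing 𝕜] [Module 𝕜 E]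
    [NormSMulClass 𝕜 E] [SMulCommClass ℝ 𝕜 E] {w : 𝕜} {c C : ℝ} (hw : w ≠ 1)
    (hfw : ∀ t, f (t + c) = w • f t) (hf : AEStronglyMeasurable f) (hC : ∀ t, ‖f t‖ ≤ C) :
    HasTimeAverage f 0 := by
  have hint := intervalIntegrable_of_norm_le hf hC
  have hbound : ∀ a, ‖∫ t in a..a + c, f t‖ ≤ C * |c| := fun a => by
    simpa using intervalIntegral.norm_integral_le_of_norm_le_const (a := a) (b := a + c)
      fun t _ => hC t
  refine hasTimeAverage_of_norm_integral_sub_le (B := 2 * (C * |c|) / ‖1 - w‖) fun T => ?_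
  rw [smul_zero, sub_zero, le_div_iff₀' (norm_pos_iff.2 (sub_ne_zero.2 hw.symm)), ← norm_smul]
  calc ‖(1 - w) • ∫ t in (0 : ℝ)..T, f t‖
      = ‖(∫ t in (0 : ℝ)..T, f t) - ∫ t in (0 + c)..(T + c), f t‖ := by
        rw [sub_smul, one_smul, ← intervalIntegral.integral_smul,
          ← intervalIntegral.integral_comp_add_right]
        simp only [hfw]
    _ = ‖(∫ t in (0 : ℝ)..0 + c, f t) - ∫ t in T..T + c, f t‖ := by
        rw [intervalIntegral.integral_interval_sub_interval_comm (hint _ _) (hint _ _) (hint _ _)]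
    _ ≤ 2 * (C * |c|) := by
        linarith [norm_sub_le (∫ t in (0 : ℝ)..0 + c, f t) (∫ t in T..T + c, f t), hbound 0,
          hbound T]

lemma hasTimeAverage_of_forall_approx (hf : ∀ T, IntervalIntegrable f volume 0 T)
    (h : ∀ ε > 0, ∃ (p : ℝ → E) (d : ℝ → ℝ) (δ : ℝ), HasTimeAverage p L ∧
      (∀ T, IntervalIntegrable p volume 0 T) ∧ (∀ T, IntervalIntegrable d volume 0 T) ∧
      (∀ t, ‖f t - p t‖ ≤ d t) ∧ HasTimeAverage d δ ∧ δ < ε) :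
    HasTimeAverage f L := by
  refine Metric.tendsto_nhds.2 fun ε hε => ?_
  obtain ⟨p, d, δ, hp, hpi, hdi, hfp, hd, hδ⟩ := h (ε / 2) (half_pos hε)
  filter_upwards [Metric.tendsto_nhds.1 hp _ (half_pos hε), hd.eventually_lt_const hδ,
    eventually_gt_atTop 0] with T hpT hdT hT
  have hfpT : dist (T⁻¹ • ∫ t in (0 : ℝ)..T, f t) (T⁻¹ • ∫ t in (0 : ℝ)..T, p t) < ε / 2 := by
    rw [dist_eq_norm, ← smul_sub, ← intervalIntegral.integral_sub (hf T) (hpi T), norm_smul,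
      Real.norm_of_nonneg (inv_nonneg.2 hT.le)]
    refine lt_of_le_of_lt ?_ hdT
    exact mul_le_mul_of_nonneg_left (intervalIntegral.norm_integral_le_of_norm_le hT.le
      (ae_of_all _ fun t _ => hfp t) (hdi T)) (inv_nonneg.2 hT.le)
  linarith [dist_triangle (T⁻¹ • ∫ t in (0 : ℝ)..T, f t) (T⁻¹ • ∫ t in (0 : ℝ)..T, p t) L]

end TimeAverage

section Incommensurable

variable {P : ℝ} [hP : Fact (0 < P)]

lemma exists_mem_span_fourier_integral_haar_norm_sub_lt {F : AddCircle P → ℂ}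
    (hF : Integrable F AddCircle.haarAddCircle) {ε : ℝ} (hε : 0 < ε) :
    ∃ p ∈ Submodule.span ℂ (range (fourier (T := P))),
      ∫ x, ‖F x - p x‖ ∂AddCircle.haarAddCircle < ε := by
  let toL1 := ContinuousMap.toLp (E := ℂ) 1 (AddCircle.haarAddCircle (T := P)) ℂ
  have hdense : ((Submodule.span ℂ (range fourier)).map toL1.toLinearMap).topologicalClosure = ⊤ :=
    (ContinuousMap.toLp_denseRange ℂ _ ℂ
      ENNReal.one_ne_top).topologicalClosure_map_submodule span_fourier_closure_eq_top
  obtain ⟨_, ⟨p, hp, rfl⟩, hdist⟩ :=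
    Metric.mem_closure_iff.1 (hdense.ge (Submodule.mem_top (x := hF.toL1 F))) ε hε
  rw [L1.dist_eq_integral_dist] at hdist
  refine ⟨p, hp, lt_of_eq_of_lt (integral_congr_ae ?_) hdist⟩
  have hpL1 : toL1 p =ᵐ[AddCircle.haarAddCircle] p := ContinuousMap.coeFn_toLp _ p
  filter_upwards [hF.coeFn_toL1, hpL1] with x hFx hpx
  rw [ContinuousLinearMap.coe_coe, hFx, hpx, dist_eq_norm]

lemma exists_mem_span_fourier_intervalIntegral_norm_sub_lt {f : ℝ → ℂ}
    (hf : IntervalIntegrable f volume 0 P) {ε : ℝ} (hε : 0 < ε) :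
    ∃ p ∈ Submodule.span ℂ (range (fourier (T := P))), ∫ t in (0 : ℝ)..P, ‖f t - p t‖ < ε := by
  have hP0 := hP.out
  have hF : Integrable (AddCircle.liftIoc P 0 f) (AddCircle.haarAddCircle (T := P)) := by
    refine memLp_one_iff_integrable.1 (MemLp.memLp_liftIoc ?_).haarAddCircle
    rw [zero_add, memLp_one_iff_integrable]
    exact hf.1
  obtain ⟨p, hp, hFp⟩ :=
    exists_mem_span_fourier_integral_haar_norm_sub_lt hF (ε := P⁻¹ * ε) (by positivity)
  refine ⟨p, hp, ?_⟩
  rw [AddCircle.integral_haarAddCircle, ← AddCircle.intervalIntegral_preimage P 0, zero_add,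
    smul_eq_mul, mul_lt_mul_iff_right₀ (inv_pos.2 hP0)] at hFp
  refine lt_of_eq_of_lt (intervalIntegral.integral_congr_Ioo_of_le hP0.le fun t ht => ?_) hFp
  simp only [AddCircle.liftIoc_coe_apply (zero_add P ▸ Ioo_subset_Ioc_self ht)]

lemma fourier_coe_ne_one {Q : ℝ} (hQ : Irrational (Q / P)) {n : ℤ} (hn : n ≠ 0) :
    fourier n (Q : AddCircle P) ≠ 1 := by
  intro h
  rw [fourier_apply, Circle.coe_eq_one, ← AddCircle.toCircle_zero,
    (AddCircle.injective_toCircle hP.out.ne').eq_iff] at h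
  exact hQ (AddCircle.isOfFinAddOrder_iff_exists_rat_eq_div.1
    (isOfFinAddOrder_iff_zsmul_eq_zero.2 ⟨n, hn, h⟩))

variable {E : Type*} [NormedAddCommGroup E] [NormedSpace ℂ E] {g : ℝ → E} {Q C : ℝ}

lemma hasTimeAverage_fourier_smul (hQ : Irrational (Q / P)) (hg : AEStronglyMeasurable g)
    (hC : ∀ t, ‖g t‖ ≤ C) (hgQ : Periodic g Q) (hg0 : HasTimeAverage g 0) (n : ℤ) :
    HasTimeAverage (fun t : ℝ => fourier n (t : AddCircle P) • g t) 0 := by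
  obtain rfl | hn := eq_or_ne n 0
  · simpa only [fourier_zero, one_smul] using hg0
  · refine hasTimeAverage_zero_of_add_eq_smul (c := Q) (C := C) (fourier_coe_ne_one hQ hn)
      (fun t => ?_) ?_ fun t => ?_
    · rw [hgQ t, smul_smul, AddCircle.coe_add, fourier_apply, smul_add, AddCircle.toCircle_add,
        Circle.coe_mul, mul_comm, fourier_apply, fourier_apply]
    · exact Continuous.aestronglyMeasurable (by fun_prop) |>.smul hg
    · rw [norm_smul, fourier_apply, Circle.norm_coe, one_mul]
      exact hC t

lemma hasTimeAverage_smul_of_mem_span_fourier (hQ : Irrational (Q / P))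
    (hg : AEStronglyMeasurable g) (hC : ∀ t, ‖g t‖ ≤ C) (hgQ : Periodic g Q)
    (hg0 : HasTimeAverage g 0) {p : C(AddCircle P, ℂ)}
    (hp : p ∈ Submodule.span ℂ (range (fourier (T := P)))) :
    HasTimeAverage (fun t : ℝ => p t • g t) 0 := by
  have hint (q : C(AddCircle P, ℂ)) (T : ℝ) :
      IntervalIntegrable (fun t : ℝ => q t • g t) volume 0 T :=
    intervalIntegrable_smul_of_norm_le (Continuous.intervalIntegrable (by fun_prop) 0 T) hg hC
  induction hp using Submodule.span_induction with
  | mem p hp =>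
    obtain ⟨n, rfl⟩ := hp
    exact hasTimeAverage_fourier_smul hQ hg hC hgQ hg0 n
  | zero => simp [HasTimeAverage]
  | add p q _ _ hp hq =>
    simpa only [ContinuousMap.add_apply, add_smul, add_zero] using hp.add hq (hint p) (hint q)
  | smul c p _ hp =>
    simpa only [ContinuousMap.smul_apply, smul_assoc, smul_zero] using hp.const_smul c

theorem hasTimeAverage_smul_of_irrational_div {f : ℝ → ℂ} (hQ : Irrational (Q / P))
    (hf : Periodic f P) (hfi : IntervalIntegrable f volume 0 P) (hg : AEStronglyMeasurable g)
    (hC : ∀ t, ‖g t‖ ≤ C) (hgQ : Periodic g Q) (hg0 : HasTimeAverage g 0) :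
    HasTimeAverage (fun t => f t • g t) 0 := by
  have hfi' := hf.intervalIntegrable₀ hP.out.ne' hfi
  refine hasTimeAverage_of_forall_approx
    (fun T => intervalIntegrable_smul_of_norm_le (hfi' 0 T) hg hC) fun ε hε => ?_
  obtain ⟨δ, hδ, hCδ⟩ := exists_pos_mul_lt hε (C * P⁻¹)
  obtain ⟨p, hp, hfp⟩ := exists_mem_span_fourier_intervalIntegral_norm_sub_lt hfi hδ
  have hpi (T : ℝ) : IntervalIntegrable (fun t : ℝ => p t) volume 0 T :=
    Continuous.intervalIntegrable (by fun_prop) 0 T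
  have hper : Periodic (fun t : ℝ => ‖f t - p t‖) P := fun t => by
    simp only [hf t, AddCircle.coe_add_period]
  have hpg : HasTimeAverage (fun t : ℝ => p t • g t) 0 :=
    hasTimeAverage_smul_of_mem_span_fourier hQ hg hC hgQ hg0 hp
  have herror : HasTimeAverage (fun t : ℝ => C * ‖f t - p t‖)
      (C * (P⁻¹ * ∫ t in (0 : ℝ)..P, ‖f t - p t‖)) :=
    (hasTimeAverage_of_periodic hP.out.ne' hper (hfi.sub (hpi P)).norm).const_smul C
  refine ⟨_, _, _, hpg, fun T => intervalIntegrable_smul_of_norm_le (hpi T) hg hC,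
    fun T => ((hfi' 0 T).sub (hpi T)).norm.const_mul C, fun t => ?_, herror, ?_⟩
  · rw [← sub_smul, norm_smul, mul_comm]
    exact mul_le_mul_of_nonneg_right (hC t) (norm_nonneg _)
  · have hC0 : 0 ≤ C := (norm_nonneg _).trans (hC 0)
    have hP0 := hP.out
    refine lt_of_le_of_lt ?_ hCδ
    rw [← mul_assoc]
    gcongr

end Incommensurable

section SquareWave

lemma sgn_eq_sign (x : ℝ) : sgn x = SignType.sign x := by
  rcases lt_trichotomy x 0 with hx | rfl | hx <;> simp [sgn, *, not_lt_of_gt]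

lemma sgn_neg (x : ℝ) : sgn (-x) = -sgn x := by
  rw [sgn_eq_sign, sgn_eq_sign, Left.sign_neg, SignType.coe_neg]

lemma sgn_mul (x y : ℝ) : sgn (x * y) = sgn x * sgn y := by
  simp only [sgn_eq_sign, sign_mul, SignType.coe_mul]

lemma abs_sgn_le_one (x : ℝ) : |sgn x| ≤ 1 := by
  unfold sgn
  split_ifs <;> simp

lemma measurable_sgn : Measurable sgn :=
  Measurable.ite measurableSet_Ioi measurable_const
    (Measurable.ite measurableSet_Iio measurable_const measurable_const)

/-- The square wave of period `1`, the common factor of `Φ` in both variables. -/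
noncomputable def squareWave (t : ℝ) : ℝ := sgn (Real.cos (2 * π * t))

lemma Φ_eq_squareWave_mul (u v : ℝ) : Φ u v = squareWave u * squareWave v := sgn_mul _ _

lemma measurable_squareWave : Measurable squareWave := measurable_sgn.comp (by fun_prop)

lemma abs_squareWave_le_one (t : ℝ) : |squareWave t| ≤ 1 := abs_sgn_le_one _

lemma squareWave_antiperiodic : Antiperiodic squareWave 2⁻¹ := fun t => by
  rw [squareWave, squareWave, ← sgn_neg, ← Real.cos_add_pi]
  ring_nf

lemma squareWave_periodic : Periodic squareWave 1 := by
  simpa using squareWave_antiperiodic.periodic_two_mul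

lemma Φ_line_periodic (q : ℚ) (b : ℝ) : Periodic (fun t : ℝ => Φ t (q * t + b)) q.den := by
  intro t
  have hden : (q : ℝ) * (t + q.den) + b = q * t + b + q.num * 1 := by
    linear_combination (mod_cast Rat.mul_den_eq_num q : (q : ℝ) * q.den = q.num)
  have ht : t + q.den = t + q.den * 1 := by rw [mul_one]
  simp only [Φ_eq_squareWave_mul, hden, squareWave_periodic.int_mul q.num _]
  rw [ht, squareWave_periodic.nat_mul q.den t]

lemma hasTimeAverage_squareWave_line {a : ℝ} (ha : a ≠ 0) (b : ℝ) :
    HasTimeAverage (fun t => squareWave (a * t + b)) 0 := by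
  refine hasTimeAverage_zero_of_add_eq_smul (w := (-1 : ℝ)) (c := a⁻¹ * 2⁻¹) (by norm_num)
    (fun t => ?_) (measurable_squareWave.comp (by fun_prop)).aestronglyMeasurable
    fun t => abs_squareWave_le_one (a * t + b)
  rw [neg_one_smul]
  exact (squareWave_antiperiodic.add_const b).const_mul ha t

theorem hasTimeAverage_Φ_line_of_irrational {a : ℝ} (ha : Irrational a) (b : ℝ) :
    HasTimeAverage (fun t => Φ t (a * t + b)) 0 := by
  have hint : IntervalIntegrable (fun t => (squareWave t : ℂ)) volume 0 1 :=
    intervalIntegrable_of_norm_le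
      (Complex.measurable_ofReal.comp measurable_squareWave).aestronglyMeasurable
      (fun t => by simpa using abs_squareWave_le_one t) 0 1
  have hperiod : Periodic (fun t => squareWave (a * t + b)) a⁻¹ := by
    simpa only [mul_one] using (squareWave_periodic.add_const b).const_mul a
  have hmeas : Measurable fun t => squareWave (a * t + b) :=
    measurable_squareWave.comp (by fun_prop)
  rw [← hasTimeAverage_ofReal_iff]
  simp only [Φ_eq_squareWave_mul, Complex.ofReal_mul, Complex.ofReal_zero]
  refine hasTimeAverage_smul_of_irrational_div (P := 1) (Q := a⁻¹) (C := 1) (by simpa using ha)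
    (squareWave_periodic.comp Complex.ofReal) hint
    (Complex.measurable_ofReal.comp hmeas).aestronglyMeasurable (fun t => ?_)
    (hperiod.comp Complex.ofReal) ?_
  · simpa using abs_squareWave_le_one (a * t + b)
  · exact hasTimeAverage_ofReal_iff.2 (hasTimeAverage_squareWave_line ha.ne_zero b)

theorem exists_hasTimeAverage_Φ_line_of_rat (q : ℚ) (b : ℝ) :
    ∃ L, HasTimeAverage (fun t => Φ t (q * t + b)) L := by
  refine ⟨_, hasTimeAverage_of_periodic (mod_cast q.den_ne_zero) (Φ_line_periodic q b) ?_⟩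
  exact intervalIntegrable_of_norm_le (measurable_sgn.comp (by fun_prop)).aestronglyMeasurable
    (fun _ => abs_sgn_le_one _) 0 q.den

end SquareWave

theorem time_average_exists
    (a b : ℝ) :
    ∃ L : ℝ,
      Tendsto (fun T : ℝ => (1 / T) * ∫ t in (0:ℝ)..T, Φ t (a * t + b)) atTop (nhds L) ∧
      (Irrational a → L = 0) := by
  simp only [one_div]
  by_cases ha : Irrational a
  · exact ⟨0, hasTimeAverage_Φ_line_of_irrational ha b, fun _ => rfl⟩
  · obtain ⟨q, rfl⟩ := not_not.1 ha
    obtain ⟨L, hL⟩ := exists_hasTimeAverage_Φ_line_of_rat q b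
    exact ⟨L, hL, fun h => absurd h ha⟩
end
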